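/- arXiv:2111.14147 — 3 statements merged into one kernel-verified Lean document; each statement's English description precedes it below -/
import Mathlib

section
/- The function g : ℝ² → ℝ defined by g(x,y) = φ·max(x,y) - φ + max(max(x,y) - φ³, min(x,y)), where φ = (1+√5)/2, is convex on ℝ². -/
/-- The golden ratio `φ = (1 + √5)/2`. -/
noncomputable def φ : ℝ := (1 + Real.sqrt 5) / 2

/-- The auxiliary function `g(x,y) = φ·max(x,y) - φ + max(max(x,y) - φ³, min(x,y))`. -/
noncomputable def g (x y : ℝ) : ℝ := φ * max x y - φ + max (max x y - φ ^ 3) (min x y)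

section

variable {𝕜 E β : Type*} [CommRing 𝕜] [PartialOrder 𝕜] [IsOrderedRing 𝕜]
  [AddCommMonoid E] [SMul 𝕜 E] [AddCommGroup β] [LinearOrder β] [IsOrderedAddMonoid β]
  [Module 𝕜 β] [PosSMulStrictMono 𝕜 β] {s : Set E} {u v : E → β} {a : 𝕜}

theorem convexOn_smul_max_add_min (hu : ConvexOn 𝕜 s u) (hv : ConvexOn 𝕜 s v) (ha : 1 ≤ a) :
    ConvexOn 𝕜 s fun p => a • max (u p) (v p) + min (u p) (v p) := by
  -- Trading the minimum for `u + v - max u v` leaves only convex summands, as `0 ≤ a - 1`.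
  have h_eq (p : E) :
      a • max (u p) (v p) + min (u p) (v p) = (a - 1) • max (u p) (v p) + (u p + v p) := by
    rw [← max_add_min (u p) (v p), sub_smul, one_smul]
    abel
  simp only [h_eq]
  exact ((hu.sup hv).smul (sub_nonneg.mpr ha)).add (hu.add hv)

theorem g_convex_general (hu : ConvexOn 𝕜 s u) (hv : ConvexOn 𝕜 s v) (ha : 1 ≤ a) (b c : β) :
    ConvexOn 𝕜 s fun p =>
      a • max (u p) (v p) - b + max (max (u p) (v p) - c) (min (u p) (v p)) := by
  have h_left : ConvexOn 𝕜 s fun p => a • max (u p) (v p) + max (u p) (v p) + (-b - c) :=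
    (((hu.sup hv).smul (zero_le_one.trans ha)).add (hu.sup hv)).add_const _
  have h_right : ConvexOn 𝕜 s fun p => a • max (u p) (v p) + min (u p) (v p) + -b :=
    (convexOn_smul_max_add_min hu hv ha).add_const _
  convert h_left.sup h_right using 2 with p
  rw [← max_add_add_left, Pi.sup_apply]
  congr 1 <;> abel

end

theorem one_le_φ : 1 ≤ φ :=
  Real.one_lt_goldenRatio.le

/-- The function `g` is convex on `ℝ²`. -/
theorem g_convex : ConvexOn ℝ Set.univ (fun p : ℝ × ℝ => g p.1 p.2) :=
  g_convex_general ((LinearMap.fst ℝ ℝ ℝ).convexOn convex_univ)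
    ((LinearMap.snd ℝ ℝ ℝ).convexOn convex_univ) one_le_φ φ (φ ^ 3)
end

section
/- For all real numbers x and y with y ≤ x + φ + 1, one has g(x, y + φ) ≤ g(x, y) + φ + 1, where g(x,y) = φ·max(x,y) - φ + max(max(x,y) - φ³, min(x,y)) and φ = (1+√5)/2. -/
/-!
Write `M` and `m` for the maximum and minimum of the two arguments, so that `g + φ` is the larger of
`φ * M + m` and `φ * M + (M - φ ^ 3)`. Shifting the second argument up by `φ` raises `M` by at most
`φ`. Since `M + m` is the sum of the arguments, `φ * M + m` is `(φ - 1) * M` plus that sum and rises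
by at most `(φ - 1) * φ + φ = φ ^ 2 = φ + 1`. After the shift, the hypothesis gives
`y + φ - φ ^ 3 ≤ x`, so `M - φ ^ 3` matters only when it is `x - φ ^ 3`; this part does not change,
and `φ * M` alone rises by at most `φ ^ 2`.
-/

section OrderedGroup

variable {G : Type*} [AddCommGroup G] [LinearOrder G] [IsOrderedAddMonoid G]

theorem max_add_le_max_add {x y t : G} (ht : 0 ≤ t) : max x (y + t) ≤ max x y + t :=
  max_le (le_add_of_le_of_nonneg (le_max_left x y) ht) (add_le_add_left (le_max_right x y) t)

theorem max_max_sub_min_eq_of_le_add {x z c : G} (h : z ≤ x + c) :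
    max (max x z - c) (min x z) = max (x - c) (min x z) := by
  rcases le_total z x with hzx | hxz
  · rw [max_eq_left hzx]
  · have hz : z - c ≤ x := sub_le_iff_le_add.2 h
    have hx : x - c ≤ x := (sub_le_sub_right hxz c).trans hz
    rw [max_eq_right hxz, min_eq_left hxz, max_eq_right hz, max_eq_right hx]

end OrderedGroup

section OrderedRing

variable {R : Type*} [CommRing R] [LinearOrder R] [IsStrictOrderedRing R] {a t x y c : R}

theorem mul_max_add_min_add_le (ha : 1 ≤ a) (ht : 0 ≤ t) :
    a * max x (y + t) + min x (y + t) ≤ a * max x y + min x y + a * t :=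
  calc
    a * max x (y + t) + min x (y + t)
        = (a - 1) * max x (y + t) + (x + (y + t)) := by
      rw [← max_add_min x (y + t)]; ring
    _ ≤ (a - 1) * (max x y + t) + (x + (y + t)) := by
      gcongr
      exact max_add_le_max_add ht
    _ = (a - 1) * (max x y + t) + (max x y + min x y + t) := by
      rw [max_add_min, add_assoc]
    _ = a * max x y + min x y + a * t := by ring

theorem g_add_phi_le_general (ha : 1 ≤ a) (ht : 0 ≤ t) (h : y + t ≤ x + c) :
    a * max x (y + t) + max (max x (y + t) - c) (min x (y + t)) ≤
      a * max x y + max (max x y - c) (min x y) + a * t := by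
  rw [max_max_sub_min_eq_of_le_add h, ← max_add_add_left]
  apply max_le
  · calc
      a * max x (y + t) + (x - c) ≤ a * (max x y + t) + (max x y - c) := by
        gcongr
        · exact max_add_le_max_add ht
        · exact le_max_left x y
      _ = a * max x y + (max x y - c) + a * t := by ring
      _ ≤ a * max x y + max (max x y - c) (min x y) + a * t := by
        gcongr
        exact le_max_left _ _
  · calc
      a * max x (y + t) + min x (y + t) ≤ a * max x y + min x y + a * t :=
        mul_max_add_min_add_le ha ht
      _ ≤ a * max x y + max (max x y - c) (min x y) + a * t := by
        gcongr
        exact le_max_right _ _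

end OrderedRing

theorem phi_sq : φ ^ 2 = φ + 1 :=
  Real.goldenRatio_sq

theorem one_lt_phi : 1 < φ :=
  Real.one_lt_goldenRatio

theorem phi_cube : φ ^ 3 = 2 * φ + 1 := by
  linear_combination (φ + 1) * phi_sq

/-- If `y ≤ x + φ + 1`, then `g(x, y+φ) ≤ g(x,y) + φ + 1`. -/
theorem g_add_phi_le (x y : ℝ) (h : y ≤ x + φ + 1) : g x (y + φ) ≤ g x y + φ + 1 := by
  have h_gap : y + φ ≤ x + φ ^ 3 := by linarith [phi_cube]
  unfold g
  linarith [g_add_phi_le_general one_lt_phi.le (zero_lt_one.trans one_lt_phi).le h_gap, phi_sq]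
end

section
/- For all real numbers c, c' ≥ 0 with min(c, c') ≤ 1, one has g(c + c', 0) ≤ g(c, 0) + g(c', 0) + φ + 1, where g(x,y) = φ·max(x,y) - φ + max(max(x,y) - φ³, min(x,y)) and φ = (1+√5)/2. -/
/-!
On the nonnegative axis, `g x 0 = φ x - φ + (x - φ³)⁺`. The affine parts cancel up to the constant
`φ`, which leaves a comparison of truncations: since the positive part is subadditive, moving one
summand out of `(c + c' - φ³)⁺` costs at most that summand, and the cheaper choice costs `min c c'`.
-/

open scoped PosPart

section LatticeOrderedGroup

variable {α : Type*} [Lattice α]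

lemma posPart_add_le [AddGroup α] [AddLeftMono α] [AddRightMono α] (a b : α) :
    (a + b)⁺ ≤ a⁺ + b⁺ :=
  sup_le (add_le_add (le_posPart a) (le_posPart b))
    (add_nonneg (posPart_nonneg a) (posPart_nonneg b))

lemma posPart_add_sub_le [AddCommGroup α] [AddLeftMono α] (a b t : α) :
    (a + b - t)⁺ ≤ (a - t)⁺ + (b - t)⁺ + a⁺ ⊓ b⁺ := by
  have move_left : (a + b - t)⁺ ≤ a⁺ + (b - t)⁺ := by
    simpa only [add_sub_assoc] using posPart_add_le a (b - t)
  have move_right : (a + b - t)⁺ ≤ (a - t)⁺ + b⁺ := by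
    simpa only [add_sub_right_comm] using posPart_add_le (a - t) b
  rw [add_inf]
  refine le_inf (move_left.trans ?_) (move_right.trans ?_)
  · rw [add_comm a⁺]
    gcongr
    exact le_add_of_nonneg_left (posPart_nonneg _)
  · gcongr
    exact le_add_of_nonneg_right (posPart_nonneg _)

end LatticeOrderedGroup

lemma g_zero_right_of_nonneg {x : ℝ} (hx : 0 ≤ x) : g x 0 = φ * x - φ + (x - φ ^ 3)⁺ := by
  rw [g, max_eq_left hx, min_eq_right hx, posPart_def]

theorem g_join_red_general (c c' : ℝ) (hc : 0 ≤ c) (hc' : 0 ≤ c') :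
    g (c + c') 0 ≤ g c 0 + g c' 0 + φ + min c c' := by
  have truncation_le : (c + c' - φ ^ 3)⁺ ≤ (c - φ ^ 3)⁺ + (c' - φ ^ 3)⁺ + min c c' := by
    simpa only [posPart_of_nonneg hc, posPart_of_nonneg hc'] using
      posPart_add_sub_le c c' (φ ^ 3)
  rw [g_zero_right_of_nonneg (add_nonneg hc hc'), g_zero_right_of_nonneg hc,
    g_zero_right_of_nonneg hc']
  linarith

/-- If `c, c' ≥ 0` and `min(c, c') ≤ 1`, then
`g(c+c', 0) ≤ g(c,0) + g(c',0) + φ + 1`. -/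
theorem g_join_red (c c' : ℝ) (hc : 0 ≤ c) (hc' : 0 ≤ c') (h : min c c' ≤ 1) :
    g (c + c') 0 ≤ g c 0 + g c' 0 + φ + 1 :=
  (g_join_red_general c c' hc hc').trans (by gcongr)
end
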